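/- Let d be a positive integer and 0 < δ < 1. There is a function g : ℝ → ℝ, depending only on d and δ, such that for every finite family 𝓕 of compact convex sets in ℝ^d, all of diameter at least one, the diameter transversal number satisfies τ_δ(𝓕) ≤ g(τ*_{δ/2}(𝓕)). -/

import Mathlib

/-- The **fractional diameter transversal number** `τ*_δ(𝓕)`: the infimum of `∑ C w(C)` over
all finitely supported functions `w` from convex sets of diameter at least `1 - δ` to `[0,1]`
such that `∑ {C : C ⊆ F} w(C) ≥ 1` for every `F ∈ 𝓕`.  A finitely supported `w` is encoded by
a finite set `T` of convex sets of diameter at least `1 - δ` together with weights `w` on it. -/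
noncomputable def fracDiamTransversal (d : ℕ) (δ : ℝ)
    (F : Finset (Set (EuclideanSpace ℝ (Fin d)))) : ℝ :=
  sInf {s : ℝ |
    ∃ (T : Finset (Set (EuclideanSpace ℝ (Fin d))))
      (w : Set (EuclideanSpace ℝ (Fin d)) → ℝ),
      (∀ C ∈ T, Convex ℝ C ∧ 1 - δ ≤ Metric.diam C ∧ 0 ≤ w C ∧ w C ≤ 1) ∧
      (∀ A ∈ F, 1 ≤ ∑ C ∈ T, {D : Set (EuclideanSpace ℝ (Fin d)) | D ⊆ A}.indicator w C) ∧
      s = ∑ C ∈ T, w C}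

/-!
A convex set of diameter at least `R` contains a pair of points whose difference is mapped to at
least `r` by one of finitely many functionals of norm at most one, where finitely many suffice
because `r < R` and the unit sphere is compact. Choosing such a pair in each set of an
almost optimal fractional transversal turns the latter into a weighted family of points of `E × E`.
For every `A` in the family some functional `f` captures a definite proportion of the weight
carried by the pairs in `A × A`, so the convex set `(A × A) ∩ {r ≤ f (x - y)}` is heavy and is met
by a weak net of the weighted points. The segments spanned by the points of the net form the
required transversal.

Weak nets of bounded size are built by induction on the dimension. Cut by a hyperplane at a weighted
median of the first coordinate: a heavy convex set is either relatively heavier within one of the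
open half spaces, or has a fair share of the weight on both sides. In the latter case it contains
the points where the segments joining the two sides cross the hyperplane, for a definite
proportion of all such segments.
-/

/-- The set of total weights `∑ C, w C` of fractional transversals of the family `F` by convex sets
of diameter at least `r`, that is, of the values whose infimum is the fractional diameter
transversal number of `F`. As in `fracDiamTransversal`, the weights are supported on a
finite set `T`. -/
def fracDiamTransversalWeights {E : Type*} [NormedAddCommGroup E] [NormedSpace ℝ E] (r : ℝ)
    (F : Set (Set E)) : Set ℝ :=
  {s | ∃ (T : Finset (Set E)) (w : Set E → ℝ),
    (∀ C ∈ T, Convex ℝ C ∧ r ≤ Metric.diam C ∧ 0 ≤ w C ∧ w C ≤ 1) ∧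
    (∀ A ∈ F, 1 ≤ ∑ C ∈ T, {D : Set E | D ⊆ A}.indicator w C) ∧
    s = ∑ C ∈ T, w C}

theorem exists_weighted_median {ι α 𝕜 : Type*} [LinearOrder α] [Nonempty α] [Field 𝕜]
    [LinearOrder 𝕜] [IsStrictOrderedRing 𝕜] (s : Finset ι) (w : ι → 𝕜) (x : ι → α)
    (hw : ∀ i ∈ s, 0 ≤ w i) :
    ∃ c, ∑ i ∈ s with x i < c, w i ≤ (∑ i ∈ s, w i) / 2 ∧
      ∑ i ∈ s with c < x i, w i ≤ (∑ i ∈ s, w i) / 2 := by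
  rcases s.eq_empty_or_nonempty with rfl | hs
  · simp
  have hsum : 0 ≤ ∑ i ∈ s, w i := Finset.sum_nonneg hw
  let upper := {a ∈ s | (∑ i ∈ s, w i) / 2 ≤ ∑ i ∈ s with x i ≤ x a, w i}
  have upper_nonempty : upper.Nonempty := by
    obtain ⟨m, hm, hmax⟩ := s.exists_max_image x hs
    refine ⟨m, Finset.mem_filter.2 ⟨hm, ?_⟩⟩
    rw [Finset.filter_true_of_mem hmax]
    linarith
  obtain ⟨a, ha, hmin⟩ := upper.exists_min_image x upper_nonempty
  refine ⟨x a, ?_, ?_⟩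
  · by_contra! hlt
    have below_nonempty : {i ∈ s | x i < x a}.Nonempty :=
      Finset.nonempty_of_sum_ne_zero (hlt.trans_le' (by positivity)).ne'
    obtain ⟨b, hb, hbmax⟩ := Finset.exists_max_image _ x below_nonempty
    rw [Finset.mem_filter] at hb
    have hb_upper : b ∈ upper := by
      refine Finset.mem_filter.2 ⟨hb.1, hlt.le.trans ?_⟩
      refine Finset.sum_le_sum_of_subset_of_nonneg (fun i hi ↦ ?_)
        fun i hi _ ↦ hw i (Finset.mem_of_mem_filter i hi)
      exact Finset.mem_filter.2 ⟨Finset.mem_of_mem_filter i hi, hbmax i hi⟩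
    exact (hmin b hb_upper).not_gt hb.2
  · have hsplit := Finset.sum_filter_add_sum_filter_not s (fun i ↦ x i ≤ x a) w
    simp only [not_le] at hsplit
    linarith [(Finset.mem_filter.1 ha).2]

section WeakNet

universe u

variable {V V' : Type*} [AddCommGroup V] [Module ℝ V] [AddCommGroup V'] [Module ℝ V']

open scoped Classical in
/-- `N` is a weak net at threshold `θ` for the points `p i` with weights `w i`, where `i ∈ s`: it
meets every convex set containing points of total weight at least `θ`. The net is weak in that its
elements need not be among the points `p i`. -/
def IsWeakNet {ι : Type*} (s : Finset ι) (w : ι → ℝ) (p : ι → V) (θ : ℝ) (N : Finset V) : Prop :=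
  ∀ C : Set V, Convex ℝ C → θ ≤ ∑ i ∈ s with p i ∈ C, w i → ∃ x ∈ N, x ∈ C

/-- Every finite weighted family of points of `V` has a weak net of at most `M` points at every
positive threshold `θ` for which the total weight is at most `K * θ`. Thus `K` plays the role of
`1 / ε` for the usual weak `ε`-nets. -/
def HasWeakNets (V : Type*) [AddCommGroup V] [Module ℝ V] (K : ℝ) (M : ℕ) : Prop :=
  ∀ (ι : Type u) (s : Finset ι) (w : ι → ℝ) (p : ι → V) (θ : ℝ), 0 < θ → (∀ i ∈ s, 0 ≤ w i) →
    ∑ i ∈ s, w i ≤ K * θ → ∃ N : Finset V, N.card ≤ M ∧ IsWeakNet s w p θ N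

theorem hasWeakNets_one_of_subsingleton [Subsingleton V] (K : ℝ) : HasWeakNets.{u} V K 1 := by
  classical
  intro ι s w p θ hθ _ _
  refine ⟨{0}, by simp, fun C _ hC ↦ ⟨0, by simp, ?_⟩⟩
  obtain ⟨i, hi⟩ := Finset.nonempty_of_sum_ne_zero (hθ.trans_le hC).ne'
  simpa [Subsingleton.elim (p i) 0] using (Finset.mem_filter.1 hi).2

theorem hasWeakNets_zero_of_lt_one {K : ℝ} (hK : K < 1) : HasWeakNets.{u} V K 0 := by
  classical
  intro ι s w p θ hθ hw hsum
  refine ⟨∅, by simp, fun C _ hC ↦ absurd ?_ (mul_lt_of_lt_one_left hθ hK).not_ge⟩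
  exact hC.trans <| (Finset.sum_le_sum_of_subset_of_nonneg (Finset.filter_subset _ _)
    fun i hi _ ↦ hw i hi).trans hsum

theorem HasWeakNets.of_surjective {K : ℝ} {M : ℕ} (h : HasWeakNets.{u} V K M) (f : V →ₗ[ℝ] V')
    (hf : Function.Surjective f) : HasWeakNets.{u} V' K M := by
  classical
  intro ι s w p θ hθ hw hsum
  choose p' hp' using fun i ↦ hf (p i)
  obtain ⟨N, hNcard, hN⟩ := h ι s w p' θ hθ hw hsum
  refine ⟨N.image f, Finset.card_image_le.trans hNcard, fun C hC hθC ↦ ?_⟩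
  obtain ⟨x, hxN, hxC⟩ := hN (f ⁻¹' C) (hC.linear_preimage f) (by simpa [hp'] using hθC)
  exact ⟨f x, Finset.mem_image_of_mem f hxN, hxC⟩

theorem exists_mk_mem_segment {a b : ℝ × V} {c : ℝ} (ha : a.1 ≤ c) (hb : c ≤ b.1) :
    ∃ y : V, (c, y) ∈ segment ℝ a b := by
  have hc : c ∈ LinearMap.fst ℝ ℝ V '' segment ℝ a b := by
    have himage := image_segment ℝ (LinearMap.fst ℝ ℝ V).toAffineMap a b
    simp only [LinearMap.coe_toAffineMap, LinearMap.fst_apply] at himage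
    rw [himage, segment_eq_Icc (ha.trans hb)]
    exact ⟨ha, hb⟩
  obtain ⟨⟨_, y⟩, hy, rfl⟩ := hc
  exact ⟨y, hy⟩

open scoped Classical in
theorem HasWeakNets.exists_net_of_crossing {K : ℝ} {M : ℕ} (h : HasWeakNets.{u} V (K ^ 2) M)
    {ι : Type u} (s : Finset ι) (w : ι → ℝ) (p : ι → ℝ × V) {θ : ℝ} (hθ : 0 < θ)
    (hw : ∀ i ∈ s, 0 ≤ w i) (hsum : ∑ i ∈ s, w i ≤ K * θ) (c : ℝ) :
    ∃ N : Finset (ℝ × V), N.card ≤ M ∧ ∀ C : Set (ℝ × V), Convex ℝ C →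
      θ ≤ ∑ i ∈ s with (p i).1 ≤ c ∧ p i ∈ C, w i →
      θ ≤ ∑ i ∈ s with c ≤ (p i).1 ∧ p i ∈ C, w i → ∃ x ∈ N, x ∈ C := by
  choose! q hq using fun a b : ℝ × V ↦ exists_mk_mem_segment (a := a) (b := b) (c := c)
  have hww : ∀ z ∈ s ×ˢ s, 0 ≤ w z.1 * w z.2 := fun z hz ↦
    mul_nonneg (hw _ (Finset.mem_product.1 hz).1) (hw _ (Finset.mem_product.1 hz).2)
  let crossing := {z ∈ s ×ˢ s | (p z.1).1 ≤ c ∧ c ≤ (p z.2).1}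
  have crossing_weight : ∑ z ∈ crossing, w z.1 * w z.2 ≤ K ^ 2 * θ ^ 2 := by
    calc ∑ z ∈ crossing, w z.1 * w z.2
        ≤ ∑ z ∈ s ×ˢ s, w z.1 * w z.2 :=
          Finset.sum_le_sum_of_subset_of_nonneg (Finset.filter_subset _ _) fun z hz _ ↦ hww z hz
      _ = (∑ i ∈ s, w i) ^ 2 := by rw [Finset.sum_product, ← Finset.sum_mul_sum, sq]
      _ ≤ (K * θ) ^ 2 := pow_le_pow_left₀ (Finset.sum_nonneg hw) hsum 2
      _ = K ^ 2 * θ ^ 2 := mul_pow K θ 2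
  obtain ⟨N, hNcard, hN⟩ := h (ι × ι) crossing (fun z ↦ w z.1 * w z.2)
    (fun z ↦ q (p z.1) (p z.2)) (θ ^ 2) (by positivity)
    (fun z hz ↦ hww z (Finset.mem_of_mem_filter z hz)) crossing_weight
  refine ⟨N.image (Prod.mk c), Finset.card_image_le.trans hNcard, fun C hC hlow hhigh ↦ ?_⟩
  have hslice : Convex ℝ {y | (c, y) ∈ C} := by
    intro y hy y' hy' a b ha hb hab
    simpa [← add_mul, hab] using hC hy hy' ha hb hab
  obtain ⟨y, hyN, hyC⟩ := hN _ hslice <| by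
    calc θ ^ 2 ≤ (∑ i ∈ s with (p i).1 ≤ c ∧ p i ∈ C, w i) *
          ∑ i ∈ s with c ≤ (p i).1 ∧ p i ∈ C, w i := by
          rw [sq]
          exact mul_le_mul hlow hhigh hθ.le (hθ.le.trans hlow)
      _ = ∑ z ∈ {i ∈ s | (p i).1 ≤ c ∧ p i ∈ C} ×ˢ {i ∈ s | c ≤ (p i).1 ∧ p i ∈ C},
          w z.1 * w z.2 := by rw [Finset.sum_mul_sum, Finset.sum_product]
      _ ≤ ∑ z ∈ crossing with q (p z.1) (p z.2) ∈ {y | (c, y) ∈ C}, w z.1 * w z.2 := by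
          refine Finset.sum_le_sum_of_subset_of_nonneg (fun z hz ↦ ?_) fun z hz _ ↦
            hww z (Finset.mem_of_mem_filter z (Finset.mem_of_mem_filter z hz))
          simp only [Finset.mem_product, Finset.mem_filter, crossing, Set.mem_ofPred_eq] at hz ⊢
          obtain ⟨⟨h₁, hle₁, hC₁⟩, h₂, hle₂, hC₂⟩ := hz
          exact ⟨⟨⟨h₁, h₂⟩, hle₁, hle₂⟩, hC.segment_subset hC₁ hC₂ (hq _ _ hle₁ hle₂)⟩
  exact ⟨(c, y), Finset.mem_image_of_mem _ hyN, hyC⟩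

-- The constants: half of the weight is at most `K * θ / 2 = (3 / 4 * K) * (2 / 3 * θ)`, and a
-- convex set of weight `θ` has weight at least `θ / 3` in both closed half spaces or more than
-- `2 / 3 * θ` in an open one.
theorem HasWeakNets.real_prod {K : ℝ} {M₁ M₂ : ℕ} (h₁ : HasWeakNets.{u} (ℝ × V) (3 / 4 * K) M₁)
    (h₂ : HasWeakNets.{u} V ((3 * K) ^ 2) M₂) :
    HasWeakNets.{u} (ℝ × V) K (M₁ + M₁ + M₂) := by
  classical
  intro ι s w p θ hθ hw hsum
  obtain ⟨c, hlow, hhigh⟩ := exists_weighted_median s w (fun i ↦ (p i).1) hw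
  obtain ⟨N₁, hN₁card, hN₁⟩ := h₁ ι {i ∈ s | (p i).1 < c} w p (2 / 3 * θ) (by positivity)
    (fun i hi ↦ hw i (Finset.mem_of_mem_filter i hi)) (by linarith)
  obtain ⟨N₂, hN₂card, hN₂⟩ := h₁ ι {i ∈ s | c < (p i).1} w p (2 / 3 * θ) (by positivity)
    (fun i hi ↦ hw i (Finset.mem_of_mem_filter i hi)) (by linarith)
  obtain ⟨N₃, hN₃card, hN₃⟩ := h₂.exists_net_of_crossing s w p (θ := θ / 3) (by positivity) hw
    (by linarith) c
  refine ⟨N₁ ∪ N₂ ∪ N₃, ?_, fun C hC hθC ↦ ?_⟩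
  · grw [Finset.card_union_le, Finset.card_union_le, hN₁card, hN₂card, hN₃card]
  simp only [Finset.mem_union]
  by_cases hle : θ / 3 ≤ ∑ i ∈ s with (p i).1 ≤ c ∧ p i ∈ C, w i
  · by_cases hge : θ / 3 ≤ ∑ i ∈ s with c ≤ (p i).1 ∧ p i ∈ C, w i
    · obtain ⟨x, hx, hxC⟩ := hN₃ C hC hle hge
      exact ⟨x, .inr hx, hxC⟩
    · have hsplit := Finset.sum_filter_add_sum_filter_not {i ∈ s | p i ∈ C} (fun i ↦ c ≤ (p i).1) w
      simp only [not_le, Finset.filter_comm (p · ∈ C), Finset.filter_filter] at hsplit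
      obtain ⟨x, hx, hxC⟩ := hN₁ C hC (by rw [Finset.filter_filter]; linarith)
      exact ⟨x, .inl (.inl hx), hxC⟩
  · have hsplit := Finset.sum_filter_add_sum_filter_not {i ∈ s | p i ∈ C} (fun i ↦ (p i).1 ≤ c) w
    simp only [not_le, Finset.filter_comm (p · ∈ C), Finset.filter_filter] at hsplit
    obtain ⟨x, hx, hxC⟩ := hN₂ C hC (by rw [Finset.filter_filter]; linarith)
    exact ⟨x, .inl (.inr hx), hxC⟩

theorem exists_hasWeakNets_real_prod (h : ∀ K, ∃ M, HasWeakNets.{u} V K M) (K : ℝ) :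
    ∃ M, HasWeakNets.{u} (ℝ × V) K M := by
  have of_pow_mul_lt_one (k : ℕ) :
      ∀ K : ℝ, (3 / 4 : ℝ) ^ k * K < 1 → ∃ M, HasWeakNets.{u} (ℝ × V) K M := by
    induction k with
    | zero => exact fun K hK ↦ ⟨0, hasWeakNets_zero_of_lt_one (by simpa using hK)⟩
    | succ k ih =>
      intro K hK
      obtain ⟨M₁, h₁⟩ := ih (3 / 4 * K) (by rwa [← mul_assoc, ← pow_succ])
      obtain ⟨M₂, h₂⟩ := h ((3 * K) ^ 2)
      exact ⟨_, h₁.real_prod h₂⟩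
  rcases le_or_gt K 0 with hK | hK
  · exact of_pow_mul_lt_one 0 K (by linarith)
  · obtain ⟨k, hk⟩ := exists_pow_lt_of_lt_one (one_div_pos.2 hK) (by norm_num : (3 / 4 : ℝ) < 1)
    exact of_pow_mul_lt_one k K ((lt_div_iff₀ hK).1 hk)

theorem exists_hasWeakNets_fin_fun (n : ℕ) (K : ℝ) : ∃ M, HasWeakNets.{u} (Fin n → ℝ) K M := by
  induction n generalizing K with
  | zero => exact ⟨1, hasWeakNets_one_of_subsingleton K⟩
  | succ n ih =>
    obtain ⟨M, hM⟩ := exists_hasWeakNets_real_prod ih K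
    let e := Fin.consLinearEquiv ℝ fun _ : Fin (n + 1) ↦ ℝ
    exact ⟨M, hM.of_surjective e.toLinearMap e.surjective⟩

theorem exists_hasWeakNets (V : Type*) [AddCommGroup V] [Module ℝ V] [FiniteDimensional ℝ V]
    (K : ℝ) : ∃ M, HasWeakNets.{u} V K M := by
  let e := (Module.finBasis ℝ V).equivFun.symm
  exact (exists_hasWeakNets_fin_fun _ K).imp fun _ hM ↦ hM.of_surjective e.toLinearMap e.surjective

end WeakNet

section Directions

theorem exists_lt_dist_of_lt_diam {X : Type*} [PseudoMetricSpace X] {C : Set X} {l : ℝ}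
    (hl : 0 ≤ l) (h : l < Metric.diam C) : ∃ x ∈ C, ∃ y ∈ C, l < dist x y := by
  by_contra! hle
  exact (Metric.diam_le_of_forall_dist_le hl hle).not_gt h

variable (E : Type*) [NormedAddCommGroup E] [NormedSpace ℝ E] [FiniteDimensional ℝ E]

theorem exists_finset_dual_mul_norm_le {ρ : ℝ} (hρ : ρ < 1) :
    ∃ U : Finset (StrongDual ℝ E), (∀ f ∈ U, ‖f‖ ≤ 1) ∧ ∀ x, ∃ f ∈ U, ρ * ‖x‖ ≤ f x := by
  classical
  choose g hg_norm hg using exists_dual_vector'' ℝ (E := E)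
  obtain ⟨t, -, ht⟩ := (isCompact_sphere (0 : E) 1).elim_nhds_subcover
    (fun x ↦ {y | ρ < g x y}) fun x hx ↦
      (isOpen_lt continuous_const (g x).continuous).mem_nhds (by simp_all)
  refine ⟨insert 0 (t.image g), by simp [hg_norm], fun x ↦ ?_⟩
  rcases eq_or_ne x 0 with rfl | hx
  · exact ⟨0, by simp⟩
  have hx_sphere : ‖x‖⁻¹ • x ∈ Metric.sphere (0 : E) 1 := by simp [norm_smul, hx]
  obtain ⟨a, hat, hax⟩ := Set.mem_iUnion₂.1 (ht hx_sphere)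
  refine ⟨g a, Finset.mem_insert_of_mem (Finset.mem_image_of_mem g hat), ?_⟩
  rw [Set.mem_ofPred_eq, map_smul, smul_eq_mul, inv_mul_eq_div, lt_div_iff₀ (by positivity)] at hax
  exact hax.le

theorem exists_finset_dual_le_apply_sub {r R : ℝ} (hr : 0 ≤ r) (hrR : r < R) :
    ∃ U : Finset (StrongDual ℝ E), U.Nonempty ∧ (∀ f ∈ U, ‖f‖ ≤ 1) ∧
      ∀ C : Set E, R ≤ Metric.diam C → ∃ f ∈ U, ∃ x ∈ C, ∃ y ∈ C, r ≤ f (x - y) := by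
  obtain ⟨l, hrl, hlR⟩ := exists_between hrR
  have hl : 0 < l := hr.trans_lt hrl
  obtain ⟨U, hU_norm, hU⟩ := exists_finset_dual_mul_norm_le E ((div_lt_one hl).2 hrl)
  refine ⟨U, (hU 0).imp fun f hf ↦ hf.1, hU_norm, fun C hC ↦ ?_⟩
  obtain ⟨x, hx, y, hy, hxy⟩ := exists_lt_dist_of_lt_diam hl.le (hlR.trans_le hC)
  obtain ⟨f, hf, hfxy⟩ := hU (x - y)
  refine ⟨f, hf, x, hx, y, hy, ?_⟩
  calc r = r / l * l := (div_mul_cancel₀ r hl.ne').symm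
    _ ≤ r / l * ‖x - y‖ := by gcongr; exact (dist_eq_norm x y ▸ hxy).le
    _ ≤ f (x - y) := hfxy

end Directions

section Transversal

variable {E : Type*} [NormedAddCommGroup E] [NormedSpace ℝ E]

theorem convex_prod_inter_le_apply_sub {A : Set E} (hA : Convex ℝ A) (f : E →ₗ[ℝ] ℝ) (r : ℝ) :
    Convex ℝ (A ×ˢ A ∩ {x | r ≤ f (x.1 - x.2)}) :=
  (hA.prod hA).inter <| convex_halfSpace_ge
    (f ∘ₗ (LinearMap.fst ℝ E E - LinearMap.snd ℝ E E)).isLinear r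

theorem dist_le_diam_segment (x y : E) : dist x y ≤ Metric.diam (segment ℝ x y) := by
  rw [← convexHull_pair, convexHull_diam]
  exact Metric.dist_le_diam_of_mem (Set.toFinite _).isBounded (by simp) (by simp)

theorem fracDiamTransversalWeights_nonempty {r : ℝ} (F : Finset (Set E))
    (hF : ∀ A ∈ F, Convex ℝ A ∧ r ≤ Metric.diam A) :
    (fracDiamTransversalWeights r (F : Set (Set E))).Nonempty := by
  refine ⟨_, F, fun _ ↦ 1, fun C hC ↦ ⟨(hF C hC).1, (hF C hC).2, by simp⟩, fun A hA ↦ ?_, rfl⟩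
  calc (1 : ℝ) = {D | D ⊆ A}.indicator (fun _ ↦ 1) A := by simp
    _ ≤ _ := Finset.single_le_sum (f := {D | D ⊆ A}.indicator fun _ ↦ (1 : ℝ))
      (fun _ _ ↦ Set.indicator_nonneg (by simp) _) hA

variable (E) in
open scoped Classical in
theorem exists_pair_net [FiniteDimensional ℝ E] {r R : ℝ} (hr : 0 ≤ r) (hrR : r < R) (W : ℝ) :
    ∃ M : ℕ, ∀ (T : Finset (Set E)) (w : Set E → ℝ),
      (∀ C ∈ T, R ≤ Metric.diam C) → (∀ C ∈ T, 0 ≤ w C) → ∑ C ∈ T, w C ≤ W →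
      ∃ N : Finset (E × E), N.card ≤ M ∧ (∀ x ∈ N, r ≤ dist x.1 x.2) ∧
        ∀ A, Convex ℝ A → 1 ≤ ∑ C ∈ T with C ⊆ A, w C → ∃ x ∈ N, x.1 ∈ A ∧ x.2 ∈ A := by
  obtain ⟨U, hU, hU_norm, hU_diam⟩ := exists_finset_dual_le_apply_sub E hr hrR
  obtain ⟨M, hM⟩ := exists_hasWeakNets (E × E) (U.card * W)
  refine ⟨M, fun T w hT hw hW ↦ ?_⟩
  choose! f hfU x hx y hy hfxy using hU_diam
  have hU_card : (0 : ℝ) < U.card := by exact_mod_cast hU.card_pos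
  obtain ⟨N, hNcard, hN⟩ := hM (Set E) T w (fun C ↦ (x C, y C)) (U.card : ℝ)⁻¹ (by positivity) hw
    (by rwa [mul_right_comm, mul_inv_cancel₀ hU_card.ne', one_mul])
  refine ⟨{z ∈ N | r ≤ dist z.1 z.2}, (Finset.card_filter_le _ _).trans hNcard,
    fun z hz ↦ (Finset.mem_filter.1 hz).2, fun A hA hAw ↦ ?_⟩
  obtain ⟨g, hgU, hg⟩ : ∃ g ∈ U, (U.card : ℝ)⁻¹ ≤ ∑ C ∈ {C ∈ T | C ⊆ A} with f C = g, w C :=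
    Finset.exists_le_sum_fiber_of_maps_to_of_nsmul_le_sum
      (fun C hC ↦ hfU C (hT C (Finset.mem_of_mem_filter C hC))) hU
      (by rwa [nsmul_eq_mul, mul_inv_cancel₀ hU_card.ne'])
  obtain ⟨z, hzN, ⟨hz₁, hz₂⟩, hgz⟩ := hN _ (convex_prod_inter_le_apply_sub hA g r) <| by
    refine hg.trans (Finset.sum_le_sum_of_subset_of_nonneg (fun C hC ↦ ?_) fun C hC _ ↦ ?_)
    · simp only [Finset.mem_filter] at hC ⊢
      obtain ⟨⟨hCT, hCA⟩, rfl⟩ := hC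
      have hCR := hT C hCT
      exact ⟨hCT, ⟨hCA (hx C hCR), hCA (hy C hCR)⟩, hfxy C hCR⟩
    · simp only [Finset.mem_filter] at hC
      exact hw C hC.1
  refine ⟨z, Finset.mem_filter.2 ⟨hzN, ?_⟩, hz₁, hz₂⟩
  calc r ≤ g (z.1 - z.2) := hgz
    _ ≤ ‖g (z.1 - z.2)‖ := Real.le_norm_self _
    _ ≤ dist z.1 z.2 := by
      simpa [dist_eq_norm] using g.le_of_opNorm_le (hU_norm g hgU) (z.1 - z.2)

theorem transversal_bounded_by_fractional_transversal_general [FiniteDimensional ℝ E] {r R : ℝ}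
    (hr : 0 ≤ r) (hrR : r < R) :
    ∃ g : ℝ → ℝ, ∀ F : Set (Set E), (∀ A ∈ F, Convex ℝ A) →
      (fracDiamTransversalWeights R F).Nonempty →
      ∃ T : Finset (Set E), (∀ C ∈ T, Convex ℝ C ∧ r ≤ Metric.diam C) ∧
        (∀ A ∈ F, ∃ C ∈ T, C ⊆ A) ∧ (T.card : ℝ) ≤ g (sInf (fracDiamTransversalWeights R F)) := by
  classical
  choose M hM using exists_pair_net E hr hrR
  refine ⟨fun t ↦ M (t + 1), fun F hF hne ↦ ?_⟩
  obtain ⟨_, ⟨T, w, hT, hcover, rfl⟩, hlt⟩ := exists_lt_of_csInf_lt hne (lt_add_one _)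
  obtain ⟨N, hNcard, hNdist, hN⟩ := hM _ T w (fun C hC ↦ (hT C hC).2.1)
    (fun C hC ↦ (hT C hC).2.2.1) hlt.le
  refine ⟨N.image fun x ↦ segment ℝ x.1 x.2, ?_, fun A hA ↦ ?_, ?_⟩
  · simp only [Finset.forall_mem_image]
    exact fun x hx ↦ ⟨convex_segment _ _, (hNdist x hx).trans (dist_le_diam_segment _ _)⟩
  · have hAw : 1 ≤ ∑ C ∈ T with C ⊆ A, w C := by
      simpa [Set.indicator_apply, Finset.sum_filter] using hcover A hA
    obtain ⟨x, hxN, hx₁, hx₂⟩ := hN A (hF A hA) hAw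
    exact ⟨_, Finset.mem_image_of_mem _ hxN, (hF A hA).segment_subset hx₁ hx₂⟩
  · exact Nat.cast_le.2 (Finset.card_image_le.trans hNcard)

end Transversal

/-- For every finite family `𝓕` of compact convex sets in `ℝ^d`, all of diameter at least one,
the diameter transversal number `τ_δ(𝓕)` is bounded by a function `g` of the fractional
diameter transversal number `τ*_{δ/2}(𝓕)`, where `g` depends only on `d` and `δ`.  The bound
`τ_δ(𝓕) ≤ g(τ*_{δ/2}(𝓕))` is expressed by exhibiting a transversal by convex sets of diameter
at least `1 - δ` of cardinality at most `g(τ*_{δ/2}(𝓕))`. -/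
theorem transversal_bounded_by_fractional_transversal (d : ℕ) (hd : 0 < d)
    (δ : ℝ) (hδ0 : 0 < δ) (hδ1 : δ < 1) :
    ∃ g : ℝ → ℝ,
      ∀ F : Finset (Set (EuclideanSpace ℝ (Fin d))),
        (∀ A ∈ F, IsCompact A ∧ Convex ℝ A ∧ 1 ≤ Metric.diam A) →
        ∃ T : Finset (Set (EuclideanSpace ℝ (Fin d))),
          (∀ C ∈ T, Convex ℝ C ∧ 1 - δ ≤ Metric.diam C) ∧
          (∀ A ∈ F, ∃ C ∈ T, C ⊆ A) ∧
          (T.card : ℝ) ≤ g (fracDiamTransversal d (δ / 2) F) := by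
  obtain ⟨g, hg⟩ := transversal_bounded_by_fractional_transversal_general
    (E := EuclideanSpace ℝ (Fin d)) (sub_nonneg.2 hδ1.le) (by linarith : 1 - δ < 1 - δ / 2)
  exact ⟨g, fun F hF ↦ hg F (fun A hA ↦ (hF A hA).2.1) <| fracDiamTransversalWeights_nonempty F
    fun A hA ↦ ⟨(hF A hA).2.1, by linarith [(hF A hA).2.2]⟩⟩
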